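/- Let ⟨·,·⟩ be a nondegenerate symmetric bilinear form on T*𝔥₃ whose restriction to 𝔤′ = span(e₄,e₅,e₆) is nondegenerate, and let ∇ be its Levi-Civita connection. Then every symmetric bilinear form T on T*𝔥₃ that is parallel, i.e. satisfies T(∇_x y, z) + T(y, ∇_x z) = 0 for all x, y, z ∈ T*𝔥₃, is a scalar multiple of ⟨·,·⟩. In particular, such metrics are invariantly (geodesically) rigid. -/

import Mathlib

open Matrix

noncomputable section

/-- The Lie bracket of `T*𝔥₃` in the basis `(e₁,…,e₆)`:
`[e₁,e₂]=e₆`, `[e₁,e₃]=−e₅`, `[e₂,e₃]=e₄`. -/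
def bra (x y : Fin 6 → ℝ) : Fin 6 → ℝ :=
  ![0, 0, 0, x 1 * y 2 - x 2 * y 1, x 2 * y 0 - x 0 * y 2, x 0 * y 1 - x 1 * y 0]

/-- The derived algebra `𝔤′ = span(e₄,e₅,e₆)` of `T*𝔥₃`. -/
def gder : Submodule ℝ (Fin 6 → ℝ) :=
  Submodule.span ℝ {Pi.single 3 1, Pi.single 4 1, Pi.single 5 1}

/-!
Write `T = g(A ·, ·)`. For central `z` the Koszul formula gives `2 g(D_z x, y) = -g(z, [x, y])`, so
`T(x, D_z x) = 0` says that `[x, A x]` is orthogonal to the center; being central, it vanishes.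
When commuting vectors are proportional modulo the center, `A` thus induces a homothety of ratio
`k` on the quotient by the center, i.e. `B := T - k g` kills the orthogonal complement of the
center. Since `2 D_x y - [x, y]` and `D_x z` lie in this complement for central `z`,
`B([x, y], z) = 2 B(D_x y, z) = -2 B(y, D_x z) = 0`, and `B` vanishes on the center as well.
-/

open LinearMap (BilinForm ker)

variable {R V : Type*} [CommRing R] [AddCommGroup V] [Module R V]

/-- `D` is the Levi-Civita connection of the bilinear form `g` on `V` with bracket `β`, expressed
by the Koszul formula. No Jacobi identity is imposed on `β`. -/
def IsLeviCivita (β : V →ₗ[R] V →ₗ[R] V) (g : BilinForm R V) (D : V → V → V) : Prop :=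
  ∀ x y z, 2 * g (D x y) z = g (β x y) z - g (β y z) x + g (β z x) y

/-- The bilinear form `T` is parallel for the connection `D`, which need not be bilinear. -/
def IsParallel (D : V → V → V) (T : BilinForm R V) : Prop :=
  ∀ x y z, T (D x y) z + T y (D x z) = 0

variable {β : V →ₗ[R] V →ₗ[R] V} {g T : BilinForm R V} {D : V → V → V}

theorem IsParallel.sub_smul {S : BilinForm R V} (hT : IsParallel D T) (hS : IsParallel D S)
    (k : R) : IsParallel D (T - k • S) := by
  intro x y z
  simp only [LinearMap.sub_apply, LinearMap.smul_apply, smul_eq_mul]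
  linear_combination hT x y z - k * hS x y z

namespace IsLeviCivita

theorem two_mul_apply_of_mem_ker (hD : IsLeviCivita β g D) (hβ : β.IsAlt) (x y : V) {z : V}
    (hz : z ∈ ker β) : 2 * g (D x y) z = g (β x y) z := by
  have hβz : ∀ w, β z w = 0 := LinearMap.congr_fun hz
  simpa [hβz, hβ.eq_iff.1 (hβz y)] using hD x y z

theorem two_mul_apply_of_mem_ker_left (hD : IsLeviCivita β g D) (hβ : β.IsAlt) (x y : V) {z : V}
    (hz : z ∈ ker β) : 2 * g (D z x) y = -g (β x y) z := by
  have hβz : ∀ w, β z w = 0 := LinearMap.congr_fun hz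
  simpa [hβz, hβ.eq_iff.1 (hβz y)] using hD z x y

theorem two_smul_sub_mem_orthogonal_ker (hD : IsLeviCivita β g D) (hβ : β.IsAlt) (hg : g.IsSymm)
    (x y : V) : (2 : R) • D x y - β x y ∈ g.orthogonal (ker β) := by
  intro z hz
  rw [hg.eq]
  simp [hD.two_mul_apply_of_mem_ker hβ x y hz]

variable [NoZeroDivisors R] [NeZero (2 : R)]

theorem isParallel (hD : IsLeviCivita β g D) (hβ : β.IsAlt) (hg : g.IsSymm) :
    IsParallel D g := by
  intro x y z
  have hxyz := hD x y z
  have hxzy := hD x z y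
  simp only [← hβ.neg x z, ← hβ.neg x y, ← hβ.neg y z, map_neg, LinearMap.neg_apply]
    at hxyz hxzy
  refine (mul_eq_zero.1 ?_).resolve_left (two_ne_zero (α := R))
  rw [hg.eq y]
  linear_combination hxyz + hxzy

theorem apply_mem_orthogonal_ker (hD : IsLeviCivita β g D) (hβ : β.IsAlt) (hg : g.IsSymm)
    (x : V) {z : V} (hz : z ∈ ker β) : D x z ∈ g.orthogonal (ker β) := by
  intro w hw
  have hβxz : β x z = 0 := hβ.eq_iff.1 (LinearMap.congr_fun hz x)
  have hDw := hD.two_mul_apply_of_mem_ker hβ x z hw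
  rw [hβxz, map_zero, LinearMap.zero_apply, hg.eq] at hDw
  exact (mul_eq_zero.1 hDw).resolve_left two_ne_zero

theorem bracket_eq_zero_of_apply_eq (hD : IsLeviCivita β g D) (hβ : β.IsAlt)
    (hder : Submodule.map₂ β ⊤ ⊤ ≤ ker β) (hg : g.IsSymm)
    (hker : Disjoint (ker β) (g.orthogonal (ker β)))
    (hT : T.IsSymm) (hTD : IsParallel D T) {x a : V} (ha : g a = T x) : β x a = 0 := by
  refine Submodule.disjoint_def.1 hker _ (hder (Submodule.apply_mem_map₂ β trivial trivial)) ?_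
  intro z hz
  have hTx : T x (D z x) = 0 := by
    have h := hTD z x x
    rw [hT.eq, ← two_mul] at h
    exact (mul_eq_zero.1 h).resolve_left two_ne_zero
  have hDz := hD.two_mul_apply_of_mem_ker_left hβ x a hz
  rwa [hg.eq, ha, hTx, mul_zero, zero_eq_neg, hg.eq] at hDz

end IsLeviCivita

theorem IsParallel.eq_zero_of_orthogonal_ker_le_ker [NoZeroDivisors R] [NeZero (2 : R)]
    {B : BilinForm R V} (hBD : IsParallel D B) (hB : B.IsSymm) (hD : IsLeviCivita β g D)
    (hβ : β.IsAlt) (hder : ker β ≤ Submodule.map₂ β ⊤ ⊤)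
    (hg : g.IsSymm) (hker : Codisjoint (ker β) (g.orthogonal (ker β)))
    (hperp : g.orthogonal (ker β) ≤ ker B) : B = 0 := by
  have hperp' : ∀ p ∈ g.orthogonal (ker β), ∀ y, B p y = 0 :=
    fun p hp => LinearMap.congr_fun (hperp hp)
  have hbracket : ∀ x y, ∀ z ∈ ker β, B (β x y) z = 0 := by
    intro x y z hz
    have hDxz : B y (D x z) = 0 := by
      rw [hB.eq, hperp' _ (hD.apply_mem_orthogonal_ker hβ hg x hz)]
    have hDxy : B (D x y) z = 0 := by simpa [hDxz] using hBD x y z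
    simpa [hDxy] using hperp' _ (hD.two_smul_sub_mem_orthogonal_ker hβ hg x y) z
  have hcenter : ∀ w ∈ ker β, ∀ z ∈ ker β, B w z = 0 := by
    intro w hw z hz
    have hle : Submodule.map₂ β ⊤ ⊤ ≤ ker (B.flip z) :=
      Submodule.map₂_le.2 fun x _ y _ => hbracket x y z hz
    exact hle (hder hw)
  have hker_le : ker β ≤ ker B := by
    intro w hw
    ext y
    obtain ⟨z, p, hz, hp, rfl⟩ := Submodule.codisjoint_iff_exists_add_eq.1 hker y
    simp [hcenter w hw z hz, hB.eq w p, hperp' p hp w]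
  exact LinearMap.ker_eq_top.1 (top_le_iff.1 (hker.top_le.trans (sup_le hker_le hperp)))

variable {K W : Type*} [Field K] [AddCommGroup W] [Module K W] {β : W →ₗ[K] W →ₗ[K] W}

theorem exists_forall_sub_smul_mem_ker (hβ : β.IsAlt)
    (hdep : ∀ x y, β x y = 0 →
      ¬ LinearIndependent K ![(ker β).mkQ x, (ker β).mkQ y])
    {A : W →ₗ[K] W} (hA : ∀ x, β x (A x) = 0) : ∃ k : K, ∀ x, A x - k • x ∈ ker β := by
  have hA_ker : ker β ≤ (ker β).comap A := by
    intro z hz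
    ext x
    have hzx : β x (A z) = 0 := by simpa [hA x, LinearMap.mem_ker.1 hz] using hA (x + z)
    exact hβ.eq_iff.1 hzx
  obtain ⟨k, hk⟩ := LinearMap.exists_eq_smul_id_of_forall_notLinearIndependent
    (f := (ker β).mapQ (ker β) A hA_ker) <| by
      intro v
      obtain ⟨x, rfl⟩ := (ker β).mkQ_surjective v
      exact hdep x (A x) (hA x)
  refine ⟨k, fun x => (Submodule.Quotient.eq _).1 ?_⟩
  simpa using LinearMap.congr_fun hk ((ker β).mkQ x)

/-- The hypotheses on `β` hold for every free two-step nilpotent Lie algebra on at least two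
generators; `T*𝔥₃` is the one on three generators. -/
theorem stmt_17_general [NeZero (2 : K)] [FiniteDimensional K W] {g T : BilinForm K W}
    {D : W → W → W} (hβ : β.IsAlt)
    (hder : Submodule.map₂ β ⊤ ⊤ = ker β)
    (hdep : ∀ x y, β x y = 0 →
      ¬ LinearIndependent K ![(ker β).mkQ x, (ker β).mkQ y])
    (hg : g.IsSymm) (hgnd : g.Nondegenerate) (hgker : (g.restrict (ker β)).Nondegenerate)
    (hD : IsLeviCivita β g D) (hT : T.IsSymm) (hTD : IsParallel D T) :
    ∃ k : K, T = k • g := by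
  have hcompl := BilinForm.isCompl_orthogonal_of_restrict_nondegenerate hg.isRefl hgker
  let A := BilinForm.symmCompOfNondegenerate T g hgnd
  have hA : ∀ x, g (A x) = T x := BilinForm.comp_symmCompOfNondegenerate_apply T hgnd
  obtain ⟨k, hk⟩ := exists_forall_sub_smul_mem_ker hβ hdep fun x =>
    hD.bracket_eq_zero_of_apply_eq hβ hder.le hg hcompl.disjoint hT hTD (hA x)
  have hsymm : (T - k • g).IsSymm := hT.sub (hg.smul k)
  have hperp : g.orthogonal (ker β) ≤ ker (T - k • g) := by
    intro p hp
    ext x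
    rw [hsymm.eq]
    simpa [hA] using hp _ (hk x)
  have hparallel : IsParallel D (T - k • g) := hTD.sub_smul (hD.isParallel hβ hg) k
  exact ⟨k, sub_eq_zero.1 <| hparallel.eq_zero_of_orthogonal_ker_le_ker hsymm hD hβ hder.ge hg
    hcompl.codisjoint hperp⟩

/-- The bracket of `T*𝔥₃` as a bilinear map. -/
def braₗ : (Fin 6 → ℝ) →ₗ[ℝ] (Fin 6 → ℝ) →ₗ[ℝ] (Fin 6 → ℝ) :=
  LinearMap.mk₂ ℝ bra
    (fun x x' y => by ext i; fin_cases i <;> simp [bra] <;> ring)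
    (fun c x y => by ext i; fin_cases i <;> simp [bra] <;> ring)
    (fun x y y' => by ext i; fin_cases i <;> simp [bra] <;> ring)
    (fun c x y => by ext i; fin_cases i <;> simp [bra] <;> ring)

/-- The projection of `T*𝔥₃` to the coordinates of `e₁, e₂, e₃`, which identifies the quotient
`T*𝔥₃ / 𝔤′` with `ℝ³` and turns the bracket into the cross product. -/
def projAbelianization : (Fin 6 → ℝ) →ₗ[ℝ] (Fin 3 → ℝ) :=
  LinearMap.funLeft ℝ ℝ (Fin.castAdd 3)

theorem projAbelianization_eq (x : Fin 6 → ℝ) : projAbelianization x = ![x 0, x 1, x 2] := by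
  ext i; fin_cases i <;> rfl

theorem bra_eq_zero_iff (x y : Fin 6 → ℝ) :
    bra x y = 0 ↔ projAbelianization x ⨯₃ projAbelianization y = 0 := by
  simp [bra, projAbelianization_eq, cross_apply]

theorem ker_projAbelianization : ker projAbelianization = gder := by
  refine le_antisymm (fun x hx => ?_) (Submodule.span_le.2 ?_)
  · have hx' : x 0 = 0 ∧ x 1 = 0 ∧ x 2 = 0 := by
      simpa [projAbelianization_eq] using hx
    have hsum : x = x 3 • Pi.single 3 1 + x 4 • Pi.single 4 1 + x 5 • Pi.single 5 1 := by
      ext i; fin_cases i <;> simp [hx']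
    rw [hsum]
    refine add_mem (add_mem ?_ ?_) ?_ <;>
      exact Submodule.smul_mem _ _ (Submodule.subset_span (by simp))
  · rintro _ (rfl | rfl | rfl) <;> simp [projAbelianization_eq]

theorem braₗ_isAlt : braₗ.IsAlt := by
  intro x
  exact (bra_eq_zero_iff x x).2 (cross_self _)

theorem ker_braₗ_eq_ker_projAbelianization : ker braₗ = ker projAbelianization := by
  refine le_antisymm (fun x hx => ?_) (fun x hx => ?_)
  · have hx₀ : bra x (Pi.single 0 1) = 0 := LinearMap.congr_fun hx _
    have hx₁ : bra x (Pi.single 1 1) = 0 := LinearMap.congr_fun hx _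
    simp_all [bra, projAbelianization_eq]
  · refine LinearMap.mem_ker.2 (LinearMap.ext fun y => (bra_eq_zero_iff x y).2 ?_)
    rw [LinearMap.mem_ker.1 hx, map_zero, LinearMap.zero_apply]

theorem ker_braₗ : ker braₗ = gder :=
  ker_braₗ_eq_ker_projAbelianization.trans ker_projAbelianization

theorem map₂_braₗ_top_top : Submodule.map₂ braₗ ⊤ ⊤ = gder := by
  refine le_antisymm (Submodule.map₂_le.2 fun x _ y _ => ?_) (Submodule.span_le.2 ?_)
  · rw [← ker_projAbelianization]
    simp [projAbelianization_eq, braₗ, bra]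
  · have mem_of_bra_eq : ∀ {x y z}, bra x y = z → z ∈ Submodule.map₂ braₗ ⊤ ⊤ := by
      rintro x y _ rfl
      exact Submodule.apply_mem_map₂ braₗ trivial trivial
    rintro _ (rfl | rfl | rfl)
    · exact mem_of_bra_eq (x := Pi.single 1 1) (y := Pi.single 2 1)
        (by ext i; fin_cases i <;> simp [bra])
    · exact mem_of_bra_eq (x := Pi.single 2 1) (y := Pi.single 0 1)
        (by ext i; fin_cases i <;> simp [bra])
    · exact mem_of_bra_eq (x := Pi.single 0 1) (y := Pi.single 1 1)
        (by ext i; fin_cases i <;> simp [bra])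

theorem not_linearIndependent_mkQ_of_braₗ_eq_zero (x y : Fin 6 → ℝ) (hxy : braₗ x y = 0) :
    ¬ LinearIndependent ℝ ![(ker braₗ).mkQ x, (ker braₗ).mkQ y] := by
  rw [ker_braₗ_eq_ker_projAbelianization]
  intro hli
  refine crossProduct_ne_zero_iff_linearIndependent.2 ?_ ((bra_eq_zero_iff x y).1 hxy)
  have hinj : ker ((ker projAbelianization).liftQ projAbelianization le_rfl) = ⊥ :=
    Submodule.ker_liftQ_eq_bot _ _ _ le_rfl
  have himage : ((ker projAbelianization).liftQ projAbelianization le_rfl) ∘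
      ![(ker projAbelianization).mkQ x, (ker projAbelianization).mkQ y] =
        ![projAbelianization x, projAbelianization y] := by
    ext i : 1
    fin_cases i <;> rfl
  exact himage ▸ hli.map' _ hinj

/-- If the restriction to `𝔤′` of a nondegenerate symmetric bilinear form on `T*𝔥₃` is
nondegenerate, every parallel symmetric bilinear form is a scalar multiple of the metric:
the metric is invariantly (geodesically) rigid. -/
theorem stmt_17 (g : (Fin 6 → ℝ) →ₗ[ℝ] (Fin 6 → ℝ) →ₗ[ℝ] ℝ)
    (hsym : ∀ x y, g x y = g y x)
    (hnd : ∀ x, (∀ y, g x y = 0) → x = 0)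
    (hndder : ∀ x ∈ gder, (∀ y ∈ gder, g x y = 0) → x = 0)
    (D : (Fin 6 → ℝ) → (Fin 6 → ℝ) → (Fin 6 → ℝ))
    (hkoszul : ∀ x y z, 2 * g (D x y) z =
      g (bra x y) z - g (bra y z) x + g (bra z x) y)
    (T : (Fin 6 → ℝ) →ₗ[ℝ] (Fin 6 → ℝ) →ₗ[ℝ] ℝ)
    (hTsym : ∀ x y, T x y = T y x)
    (hTpar : ∀ x y z, T (D x y) z + T y (D x z) = 0) :
    ∃ c : ℝ, ∀ x y, T x y = c * g x y := by
  have hg : BilinForm.IsSymm g := ⟨hsym⟩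
  have hgnd : BilinForm.Nondegenerate g := hg.isRefl.nondegenerate_iff_separatingLeft.2 hnd
  have hgker : (BilinForm.restrict g (ker braₗ)).Nondegenerate := by
    rw [ker_braₗ]
    exact (hg.restrict gder).isRefl.nondegenerate_iff_separatingLeft.2
      fun x hx => Subtype.ext (hndder x x.2 fun y hy => hx ⟨y, hy⟩)
  obtain ⟨c, rfl⟩ := stmt_17_general braₗ_isAlt (map₂_braₗ_top_top.trans ker_braₗ.symm)
    not_linearIndependent_mkQ_of_braₗ_eq_zero hg hgnd hgker hkoszul ⟨hTsym⟩ hTpar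
  exact ⟨c, fun _ _ => rfl⟩
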